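/- arXiv:1604.08127 — 7 statements merged into one kernel-verified Lean document; each statement's English description precedes it below -/
import Mathlib

section
/- Let P be an X×X row-stochastic matrix and let π ∈ ℝ^X satisfy Pᵀπ = π. Then Pᵀ|π| = |π|, where |π| denotes the vector whose entries are the absolute values of the entries of π. -/
/-!
The triangle inequality gives `|π| = |π P| ≤ |π| P` entrywise. Since `P` does not increase the total
mass of a nonnegative vector, none of these entrywise inequalities can be strict.
-/

section

open scoped Matrix

variable {m n R : Type*} [Fintype m]

lemma abs_vecMul_le_abs_vecMul [Ring R] [LinearOrder R] [IsOrderedRing R]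
    {P : Matrix m n R} (hP : ∀ i j, 0 ≤ P i j) (v : m → R) :
    |v ᵥ* P| ≤ |v| ᵥ* P := fun j ↦
  calc |∑ i, v i * P i j| ≤ ∑ i, |v i * P i j| := Finset.abs_sum_le_sum_abs _ _
    _ = ∑ i, |v i| * P i j :=
      Finset.sum_congr rfl fun i _ ↦ by rw [abs_mul, abs_of_nonneg (hP i j)]

lemma sum_vecMul_le_sum [Fintype n] [Semiring R] [PartialOrder R] [IsOrderedRing R]
    {P : Matrix m n R} (hP : ∀ i, ∑ j, P i j ≤ 1) {v : m → R} (hv : 0 ≤ v) :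
    ∑ j, (v ᵥ* P) j ≤ ∑ i, v i :=
  calc ∑ j, ∑ i, v i * P i j = ∑ i, v i * ∑ j, P i j := by
        rw [Finset.sum_comm]
        simp only [Finset.mul_sum]
    _ ≤ ∑ i, v i := Finset.sum_le_sum fun i _ ↦ mul_le_of_le_one_right (hv i) (hP i)

lemma vecMul_eq_self_of_le_vecMul [Semiring R] [PartialOrder R] [IsOrderedRing R]
    [IsOrderedCancelAddMonoid R] {P : Matrix m m R} (hP : ∀ i, ∑ j, P i j ≤ 1) {v : m → R}
    (hv : 0 ≤ v) (hle : v ≤ v ᵥ* P) :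
    v ᵥ* P = v := by
  have hsum : ∑ j, v j = ∑ j, (v ᵥ* P) j :=
    (Finset.sum_le_sum fun j _ ↦ hle j).antisymm (sum_vecMul_le_sum hP hv)
  funext j
  exact ((Finset.sum_eq_sum_iff_of_le fun j _ ↦ hle j).1 hsum j (Finset.mem_univ j)).symm

theorem stmt_1_general [Ring R] [LinearOrder R] [IsOrderedRing R] {P : Matrix m m R}
    (hnn : ∀ i j, 0 ≤ P i j) (hrow : ∀ i, ∑ j, P i j ≤ 1) {π : m → R} (hπ : π ᵥ* P = π) :
    |π| ᵥ* P = |π| := by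
  have hle : |π| ≤ |π| ᵥ* P :=
    calc |π| = |π ᵥ* P| := by rw [hπ]
      _ ≤ |π| ᵥ* P := abs_vecMul_le_abs_vecMul hnn π
  exact vecMul_eq_self_of_le_vecMul hrow (abs_nonneg π) hle

end

/-- If `P` is row-stochastic and `Pᵀ π = π`, then `Pᵀ |π| = |π|` entrywise. -/
theorem stmt_1 (X : ℕ) (P : Matrix (Fin X) (Fin X) ℝ)
    (hnn : ∀ i j, 0 ≤ P i j) (hrow : ∀ i, ∑ j, P i j = 1)
    (π : Fin X → ℝ) (hπ : P.transpose.mulVec π = π) :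
    P.transpose.mulVec (fun i => |π i|) = fun i => |π i| := by
  rw [Matrix.mulVec_transpose] at hπ ⊢
  exact stmt_1_general hnn (fun i ↦ (hrow i).le) hπ
end

section
/- Let P be an X×X row-stochastic matrix that is TP2. Then for every n ≥ 1 the power Pⁿ is TP2 and row-stochastic, the sequence (Pⁿ)_{11} is nonincreasing in n, the sequence (Pⁿ)_{1X} is nondecreasing in n, and for each fixed n the entry (Pⁿ)_{i1} is nonincreasing in i while (Pⁿ)_{iX} is nondecreasing in i. -/
/-- A matrix is TP2 if every 2×2 minor is nonnegative:
`M_{il} M_{kj} ≤ M_{ij} M_{kl}` whenever `i < k` and `j < l`. -/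
def IsTP2 {X : ℕ} (P : Matrix (Fin X) (Fin X) ℝ) : Prop :=
  ∀ i k j l : Fin X, i < k → j < l → P i l * P k j ≤ P i j * P k l

/-!
The 2×2 Cauchy–Binet formula writes a minor of `A * B` as a sum of products of minors of `A` and
`B`, so the TP2 property passes to products and powers. In a TP2 matrix whose rows sum to `1`,
summing `A i l * A k ⊥ ≤ A i ⊥ * A k l` over `l` gives `A k ⊥ ≤ A i ⊥` for `i ≤ k`; reversing both
orders gives the statement about the last column. Finally `(P ^ (n + 1)) ⊥ ⊥` is an average of the
first column of `P ^ n`, whose largest entry is `(P ^ n) ⊥ ⊥`, and likewise `(P ^ (n + 1)) ⊥ ⊤` is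
an average of the last column, whose smallest entry is `(P ^ n) ⊥ ⊤`.
-/

open Matrix OrderDual

variable {l m n R : Type*}

/-- The 2×2 minor of a matrix on the rows `i`, `k` and the columns `j`, `l`, in this order. -/
def minorTwo [Mul R] [Sub R] (A : Matrix m n R) (i k : m) (j l : n) : R :=
  A i j * A k l - A i l * A k j

/-- Total positivity of order 2, for rectangular matrices with ordered index types. It is stated
without subtraction, so that it makes sense over semirings, and on square matrices indexed by
`Fin X` it unfolds to `IsTP2`. -/
def IsTotallyPositiveTwo [LT m] [LT n] [Mul R] [LE R] (A : Matrix m n R) : Prop :=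
  ∀ ⦃i k : m⦄ ⦃j l : n⦄, i < k → j < l → A i l * A k j ≤ A i j * A k l

section CauchyBinet

variable [CommRing R]

theorem minorTwo_self_right (A : Matrix m n R) (i k : m) (j : n) : minorTwo A i k j j = 0 :=
  sub_self _

theorem minorTwo_swap_left (A : Matrix m n R) (i k : m) (j l : n) :
    minorTwo A k i j l = -minorTwo A i k j l := by
  simp only [minorTwo]
  ring

theorem minorTwo_swap_right (A : Matrix m n R) (i k : m) (j l : n) :
    minorTwo A i k l j = -minorTwo A i k j l :=
  (neg_sub _ _).symm

theorem minorTwo_mul_eq_sum [Fintype m] (A : Matrix l m R) (B : Matrix m n R) (i k : l) (j j' : n) :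
    minorTwo (A * B) i k j j' = ∑ p, ∑ q, A i p * A k q * minorTwo B p q j j' := by
  simp only [minorTwo, mul_apply, Finset.sum_mul_sum, ← Finset.sum_sub_distrib]
  exact Finset.sum_congr rfl fun p _ ↦ Finset.sum_congr rfl fun q _ ↦ by ring

-- The factor `2` appears because each pair of intermediate indices is counted in both orders.
theorem two_mul_minorTwo_mul [Fintype m] (A : Matrix l m R) (B : Matrix m n R) (i k : l)
    (j j' : n) :
    2 * minorTwo (A * B) i k j j' = ∑ p, ∑ q, minorTwo A i k p q * minorTwo B p q j j' := by
  have swapped : minorTwo (A * B) i k j j' = ∑ p, ∑ q, A i q * A k p * minorTwo B q p j j' := by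
    rw [minorTwo_mul_eq_sum, Finset.sum_comm]
  rw [two_mul]
  nth_rewrite 1 [minorTwo_mul_eq_sum]
  simp only [swapped, ← Finset.sum_add_distrib]
  refine Finset.sum_congr rfl fun p _ ↦ Finset.sum_congr rfl fun q _ ↦ ?_
  rw [minorTwo_swap_left B p q, minorTwo.eq_def A]
  ring

end CauchyBinet

namespace IsTotallyPositiveTwo

theorem one [Preorder n] [DecidableEq n] [Semiring R] [PartialOrder R] [IsOrderedRing R] :
    IsTotallyPositiveTwo (1 : Matrix n n R) := by
  intro i k j l hik hjl
  have off_diag : (1 : Matrix n n R) i l * (1 : Matrix n n R) k j = 0 := by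
    by_cases hil : i = l
    · rw [one_apply_ne (hjl.trans (hil ▸ hik)).ne', mul_zero]
    · rw [one_apply_ne hil, zero_mul]
  rw [off_diag]
  exact mul_nonneg (zero_le_one_elem i j) (zero_le_one_elem k l)

theorem dual [LT m] [LT n] [CommMagma R] [LE R] {A : Matrix m n R} (hA : IsTotallyPositiveTwo A) :
    IsTotallyPositiveTwo (A.submatrix (ofDual : mᵒᵈ → m) (ofDual : nᵒᵈ → n)) := by
  intro i k j l hik hjl
  simpa only [submatrix_apply, mul_comm] using hA (ofDual_lt_ofDual.2 hik) (ofDual_lt_ofDual.2 hjl)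

section Mul

variable [CommRing R] [LinearOrder R] [IsStrictOrderedRing R]

theorem minorTwo_mul_minorTwo_nonneg [LT l] [LinearOrder m] [LT n] {A : Matrix l m R}
    {B : Matrix m n R} (hA : IsTotallyPositiveTwo A) (hB : IsTotallyPositiveTwo B) {i k : l}
    {j j' : n} (hik : i < k) (hjj' : j < j') (p q : m) :
    0 ≤ minorTwo A i k p q * minorTwo B p q j j' := by
  rcases lt_trichotomy p q with hpq | rfl | hqp
  · exact mul_nonneg (sub_nonneg.2 (hA hik hpq)) (sub_nonneg.2 (hB hpq hjj'))
  · rw [minorTwo_self_right, zero_mul]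
  · rw [minorTwo_swap_right A i k q p, minorTwo_swap_left B q p, neg_mul_neg]
    exact mul_nonneg (sub_nonneg.2 (hA hik hqp)) (sub_nonneg.2 (hB hqp hjj'))

theorem mul [LT l] [LinearOrder m] [Fintype m] [LT n] {A : Matrix l m R} {B : Matrix m n R}
    (hA : IsTotallyPositiveTwo A) (hB : IsTotallyPositiveTwo B) :
    IsTotallyPositiveTwo (A * B) := by
  intro i k j j' hik hjj'
  have two_mul_minor_nonneg : 0 ≤ 2 * minorTwo (A * B) i k j j' := by
    rw [two_mul_minorTwo_mul]
    exact Finset.sum_nonneg fun p _ ↦ Finset.sum_nonneg fun q _ ↦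
      hA.minorTwo_mul_minorTwo_nonneg hB hik hjj' p q
  exact sub_nonneg.1 (nonneg_of_mul_nonneg_right two_mul_minor_nonneg two_pos)

theorem pow [LinearOrder n] [Fintype n] {A : Matrix n n R} (hA : IsTotallyPositiveTwo A) (k : ℕ) :
    IsTotallyPositiveTwo (A ^ k) := by
  induction k with
  | zero => simpa only [pow_zero] using one
  | succ k ih => simpa only [pow_succ] using ih.mul hA

end Mul

section Columns

variable [CommSemiring R] [PartialOrder R] [IsOrderedRing R] [PartialOrder m] [PartialOrder n]
  [Fintype n] {A : Matrix m n R}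

theorem antitone_apply_bot [OrderBot n] (hA : IsTotallyPositiveTwo A)
    (hsum : ∀ i, ∑ j, A i j = 1) : Antitone fun i ↦ A i ⊥ := by
  refine antitone_iff_forall_lt.2 fun i k hik ↦ ?_
  calc
    A k ⊥ = ∑ l, A i l * A k ⊥ := by rw [← Finset.sum_mul, hsum, one_mul]
    _ ≤ ∑ l, A i ⊥ * A k l := Finset.sum_le_sum fun l _ ↦ by
      rcases eq_bot_or_bot_lt l with rfl | hl
      exacts [le_rfl, hA hik hl]
    _ = A i ⊥ := by rw [← Finset.mul_sum, hsum, mul_one]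

theorem monotone_apply_top [OrderTop n] (hA : IsTotallyPositiveTwo A)
    (hsum : ∀ i, ∑ j, A i j = 1) : Monotone fun i ↦ A i ⊤ :=
  (hA.dual.antitone_apply_bot fun i ↦ hsum (ofDual i)).dual_left

end Columns

end IsTotallyPositiveTwo

section Averaging

variable [Fintype n] [DecidableEq n] [Semiring R] [PartialOrder R] [IsOrderedRing R]
  {P : Matrix n n R} {v : n → R} {c : R}

theorem mulVec_apply_le_of_mem_rowStochastic (hP : P ∈ rowStochastic R n) (hv : ∀ j, v j ≤ c)
    (i : n) : (P *ᵥ v) i ≤ c :=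
  calc
    ∑ j, P i j * v j ≤ ∑ j, P i j * c :=
      Finset.sum_le_sum fun j _ ↦ mul_le_mul_of_nonneg_left (hv j) (nonneg_of_mem_rowStochastic hP)
    _ = c := by rw [← Finset.sum_mul, sum_row_of_mem_rowStochastic hP, one_mul]

theorem le_mulVec_apply_of_mem_rowStochastic (hP : P ∈ rowStochastic R n) (hv : ∀ j, c ≤ v j)
    (i : n) : c ≤ (P *ᵥ v) i :=
  calc
    c = ∑ j, P i j * c := by rw [← Finset.sum_mul, sum_row_of_mem_rowStochastic hP, one_mul]
    _ ≤ ∑ j, P i j * v j :=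
      Finset.sum_le_sum fun j _ ↦ mul_le_mul_of_nonneg_left (hv j) (nonneg_of_mem_rowStochastic hP)

end Averaging

theorem stmt_6_general [LinearOrder n] [BoundedOrder n] [Fintype n] [CommRing R] [LinearOrder R]
    [IsStrictOrderedRing R] {P : Matrix n n R} (hP : P ∈ rowStochastic R n)
    (hTP2 : IsTotallyPositiveTwo P) :
    (∀ k : ℕ, IsTotallyPositiveTwo (P ^ k) ∧ P ^ k ∈ rowStochastic R n) ∧
    (Antitone fun k : ℕ ↦ (P ^ k) ⊥ ⊥) ∧
    (Monotone fun k : ℕ ↦ (P ^ k) ⊥ ⊤) ∧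
    ∀ k : ℕ, (Antitone fun i ↦ (P ^ k) i ⊥) ∧ Monotone fun i ↦ (P ^ k) i ⊤ := by
  have pow_sum (k : ℕ) := sum_row_of_mem_rowStochastic (pow_mem hP k)
  have first_col (k : ℕ) := (hTP2.pow k).antitone_apply_bot (pow_sum k)
  have last_col (k : ℕ) := (hTP2.pow k).monotone_apply_top (pow_sum k)
  refine ⟨fun k ↦ ⟨hTP2.pow k, pow_mem hP k⟩, antitone_nat_of_succ_le fun k ↦ ?_,
    monotone_nat_of_le_succ fun k ↦ ?_, fun k ↦ ⟨first_col k, last_col k⟩⟩ <;> rw [pow_succ']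
  · exact mulVec_apply_le_of_mem_rowStochastic hP (fun _ ↦ first_col k bot_le) ⊥
  · exact le_mulVec_apply_of_mem_rowStochastic hP (fun _ ↦ last_col k bot_le) ⊥

/-- For a TP2 row-stochastic matrix `P`: every power `Pⁿ` (n ≥ 1) is TP2 and row-stochastic,
`(Pⁿ)₁₁` is nonincreasing in `n`, `(Pⁿ)₁X` is nondecreasing in `n`, and for each fixed `n` the
first column of `Pⁿ` is nonincreasing down the column while the last column is nondecreasing. -/
theorem stmt_6 (X : ℕ) (hX : 0 < X) (P : Matrix (Fin X) (Fin X) ℝ)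
    (hnn : ∀ i j, 0 ≤ P i j) (hrow : ∀ i, ∑ j, P i j = 1) (hTP2 : IsTP2 P) :
    (∀ n : ℕ, 1 ≤ n → IsTP2 (P ^ n) ∧ (∀ i j, 0 ≤ (P ^ n) i j) ∧
        (∀ i, ∑ j, (P ^ n) i j = 1)) ∧
    (∀ n : ℕ, 1 ≤ n → (P ^ (n + 1)) ⟨0, hX⟩ ⟨0, hX⟩ ≤ (P ^ n) ⟨0, hX⟩ ⟨0, hX⟩) ∧
    (∀ n : ℕ, 1 ≤ n →
        (P ^ n) ⟨0, hX⟩ ⟨X - 1, by omega⟩ ≤ (P ^ (n + 1)) ⟨0, hX⟩ ⟨X - 1, by omega⟩) ∧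
    (∀ n : ℕ, 1 ≤ n → ∀ i j : Fin X, i ≤ j →
        (P ^ n) j ⟨0, hX⟩ ≤ (P ^ n) i ⟨0, hX⟩ ∧
        (P ^ n) i ⟨X - 1, by omega⟩ ≤ (P ^ n) j ⟨X - 1, by omega⟩) := by
  obtain _ | X := X
  · exact hX.false.elim
  obtain ⟨pow, corner, opposite, cols⟩ :=
    stmt_6_general (mem_rowStochastic_iff_sum.2 ⟨hnn, hrow⟩) hTP2
  exact ⟨fun n _ ↦ ⟨(pow n).1, mem_rowStochastic_iff_sum.1 (pow n).2⟩,
    fun n _ ↦ corner n.le_succ, fun n _ ↦ opposite n.le_succ,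
    fun n _ _ _ hij ↦ ⟨(cols n).1 hij, (cols n).2 hij⟩⟩
end

section
/- Nash certification for discounted Markov games: consider a two-player Markov game on state space {1,…,X} with finite action set 𝒰 for each player, costs c_l(i,a,b) for l = 1,2, transition probabilities P_{ij}(a,b) (row-stochastic in (i,j) for each action pair), and discount factor ρ ∈ [0,1). A stationary randomized policy p for player 1 assigns to each state i a pmf p(i,·) on 𝒰 (similarly q for player 2). Define the induced row-stochastic matrix P(p,q)_{ij} = Σ_{a,b} P_{ij}(a,b) p(i,a) q(i,b), cost vectors c_l(p,q)_i = Σ_{a,b} c_l(i,a,b) p(i,a) q(i,b), and discounted costs J^l_{p,q} = Σ_{k=0}^∞ ρᵏ P(p,q)ᵏ c_l(p,q) (this series converges). Suppose policies (p*, q*) and vectors V¹, V² ∈ ℝ^X satisfy: V¹ = c₁(p*,q*) + ρ P(p*,q*) V¹ and V² = c₂(p*,q*) + ρ P(p*,q*) V², and for every policy p, V¹ ≤ c₁(p,q*) + ρ P(p,q*) V¹ entrywise, and for every policy q, V² ≤ c₂(p*,q) + ρ P(p*,q) V² entrywise. Then J¹_{p*,q*} = V¹, J²_{p*,q*} = V²,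 and for all policies p and q, J¹_{p,q*} ≥ V¹ and J²_{p*,q} ≥ V² entrywise; that is, (p*, q*) is a Nash equilibrium of the discounted Markov game. -/
/-- A stationary randomized policy assigns to each state a pmf over actions. -/
def IsPolicy {X : ℕ} {U : Type*} [Fintype U] (p : Fin X → U → ℝ) : Prop :=
  (∀ i a, 0 ≤ p i a) ∧ ∀ i, ∑ a, p i a = 1

/-- The transition matrix induced by a pair of stationary randomized policies. -/
def inducedMat {X : ℕ} {U : Type*} [Fintype U]
    (P : Fin X → Fin X → U → U → ℝ) (p q : Fin X → U → ℝ) :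
    Matrix (Fin X) (Fin X) ℝ :=
  fun i j => ∑ a, ∑ b, P i j a b * p i a * q i b

/-- The expected one-stage cost vector induced by a pair of policies. -/
def inducedCost {X : ℕ} {U : Type*} [Fintype U]
    (c : Fin X → U → U → ℝ) (p q : Fin X → U → ℝ) : Fin X → ℝ :=
  fun i => ∑ a, ∑ b, c i a b * p i a * q i b

/-- The discounted cost `J = Σ_k ρᵏ P(p,q)ᵏ c(p,q)`. -/
noncomputable def discountedJ {X : ℕ} {U : Type*} [Fintype U]
    (P : Fin X → Fin X → U → U → ℝ) (c : Fin X → U → U → ℝ) (ρ : ℝ)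
    (p q : Fin X → U → ℝ) : Fin X → ℝ :=
  ∑' k : ℕ, ρ ^ k • ((inducedMat P p q) ^ k).mulVec (inducedCost c p q)

/-!
The series `∑ₖ ρᵏ Mᵏ` inverts `I - ρM`, so `∑ₖ ρᵏ Mᵏ (V - ρMV)` telescopes to `V`. For a
row-stochastic `M` and `ρ ≥ 0` it also preserves entrywise inequalities. Hence a Bellman equality
`V - ρMV = c` identifies `V` as the discounted cost of `c`, and a Bellman inequality `V - ρMV ≤ c`
makes `V` a lower bound for it. Fixing the policy of one player turns each claim about the game into
one of these two statements about the induced matrix.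
-/

section DiscountedSeries

open Matrix

variable {n : Type*} [Fintype n]

theorem mulVec_mono_of_nonneg {R : Type*} [Semiring R] [PartialOrder R] [IsOrderedRing R]
    {m : Type*} {A : Matrix m n R} (hA : ∀ i j, 0 ≤ A i j) : Monotone (A *ᵥ ·) :=
  fun _ _ hvw i ↦ dotProduct_le_dotProduct_of_nonneg_left hvw (hA i)

variable [DecidableEq n]

theorem hasSum_pow_smul_pow_mulVec_sub {R : Type*} [CommRing R] [TopologicalSpace R]
    [IsTopologicalRing R] {M : Matrix n n R} {ρ : R} {V : n → R}
    (hV : Summable fun k : ℕ ↦ ρ ^ k • (M ^ k *ᵥ V)) :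
    HasSum (fun k : ℕ ↦ ρ ^ k • (M ^ k *ᵥ (V - ρ • (M *ᵥ V)))) V := by
  have tail : HasSum (fun k : ℕ ↦ ρ ^ (k + 1) • (M ^ (k + 1) *ᵥ V))
      (∑' k : ℕ, ρ ^ k • (M ^ k *ᵥ V) - V) := by
    simpa using (hasSum_nat_add_iff' 1).2 hV.hasSum
  have telescoping (k : ℕ) : ρ ^ k • (M ^ k *ᵥ (V - ρ • (M *ᵥ V))) =
      ρ ^ k • (M ^ k *ᵥ V) - ρ ^ (k + 1) • (M ^ (k + 1) *ᵥ V) := by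
    rw [mulVec_sub, mulVec_smul, mulVec_mulVec, ← pow_succ, smul_sub, smul_smul, ← pow_succ]
  simpa only [telescoping, sub_sub_cancel] using hV.hasSum.sub tail

theorem tsum_pow_smul_pow_mulVec_eq_of_eq_add {R : Type*} [CommRing R] [TopologicalSpace R]
    [IsTopologicalRing R] [T2Space R] {M : Matrix n n R} {ρ : R} {V c : n → R}
    (hV : Summable fun k : ℕ ↦ ρ ^ k • (M ^ k *ᵥ V)) (h : V = c + ρ • (M *ᵥ V)) :
    ∑' k : ℕ, ρ ^ k • (M ^ k *ᵥ c) = V := by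
  rw [eq_sub_of_add_eq h.symm]
  exact (hasSum_pow_smul_pow_mulVec_sub hV).tsum_eq

variable {M : Matrix n n ℝ} {ρ : ℝ}

theorem norm_mulVec_le_of_mem_rowStochastic (hM : M ∈ rowStochastic ℝ n) (v : n → ℝ) :
    ‖M *ᵥ v‖ ≤ ‖v‖ := by
  refine (pi_norm_le_iff_of_nonneg (norm_nonneg v)).2 fun i ↦ ?_
  have hMv : (M *ᵥ v) i ∈ Metric.closedBall 0 ‖v‖ :=
    (convex_closedBall 0 ‖v‖).sum_mem (fun _ _ ↦ nonneg_of_mem_rowStochastic hM)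
      (sum_row_of_mem_rowStochastic hM i)
      fun j _ ↦ mem_closedBall_zero_iff.2 (norm_le_pi_norm v j)
  exact mem_closedBall_zero_iff.1 hMv

theorem summable_pow_smul_pow_mulVec (hM : M ∈ rowStochastic ℝ n) (hρ : |ρ| < 1) (v : n → ℝ) :
    Summable fun k : ℕ ↦ ρ ^ k • (M ^ k *ᵥ v) := by
  refine .of_norm_bounded ((summable_geometric_of_lt_one (abs_nonneg ρ) hρ).mul_right ‖v‖)
    fun k ↦ ?_
  rw [norm_smul, norm_pow, Real.norm_eq_abs]
  gcongr
  exact norm_mulVec_le_of_mem_rowStochastic (pow_mem hM k) v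

theorem le_tsum_pow_smul_pow_mulVec_of_le_add {V c : n → ℝ} (hM : M ∈ rowStochastic ℝ n)
    (hρ0 : 0 ≤ ρ) (hρ1 : ρ < 1) (h : V ≤ c + ρ • (M *ᵥ V)) :
    V ≤ ∑' k : ℕ, ρ ^ k • (M ^ k *ᵥ c) := by
  have hρ : |ρ| < 1 := by rwa [abs_of_nonneg hρ0]
  refine hasSum_le (fun k ↦ ?_)
    (hasSum_pow_smul_pow_mulVec_sub (summable_pow_smul_pow_mulVec hM hρ V))
    (summable_pow_smul_pow_mulVec hM hρ c).hasSum
  have mono : Monotone (M ^ k *ᵥ ·) :=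
    mulVec_mono_of_nonneg fun _ _ ↦ nonneg_of_mem_rowStochastic (pow_mem hM k)
  exact smul_le_smul_of_nonneg_left (mono (sub_le_iff_le_add.2 h)) (pow_nonneg hρ0 k)

end DiscountedSeries

theorem inducedMat_mem_rowStochastic {X : ℕ} {U : Type*} [Fintype U]
    {P : Fin X → Fin X → U → U → ℝ} (hPnn : ∀ i j a b, 0 ≤ P i j a b)
    (hProw : ∀ i a b, ∑ j, P i j a b = 1) {p q : Fin X → U → ℝ} (hp : IsPolicy p)
    (hq : IsPolicy q) : inducedMat P p q ∈ Matrix.rowStochastic ℝ (Fin X) := by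
  refine Matrix.mem_rowStochastic_iff_sum.2 ⟨fun i j ↦ ?_, fun i ↦ ?_⟩
  · exact Finset.sum_nonneg fun a _ ↦ Finset.sum_nonneg fun b _ ↦
      mul_nonneg (mul_nonneg (hPnn i j a b) (hp.1 i a)) (hq.1 i b)
  · calc ∑ j, ∑ a, ∑ b, P i j a b * p i a * q i b
        = ∑ a, ∑ b, ∑ j, P i j a b * p i a * q i b := by
          rw [Finset.sum_comm]
          exact Finset.sum_congr rfl fun _ _ ↦ Finset.sum_comm
      _ = ∑ a, ∑ b, p i a * q i b := by simp only [← Finset.sum_mul, hProw, one_mul]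
      _ = 1 := by simp only [← Finset.mul_sum, hq.2, hp.2, mul_one]

/-- Nash certification for two-player discounted Markov games: if `(p*, q*)` and value
vectors `V¹, V²` satisfy the fixed-point equalities and the one-sided Bellman inequalities,
then the discounted-cost series converge, `J¹_{p*,q*} = V¹`, `J²_{p*,q*} = V²`, and every
unilateral deviation gives an entrywise larger cost — i.e. `(p*, q*)` is a Nash equilibrium. -/
theorem stmt_11 (X : ℕ) (U : Type*) [Fintype U] [Nonempty U]
    (P : Fin X → Fin X → U → U → ℝ)
    (hPnn : ∀ i j a b, 0 ≤ P i j a b) (hProw : ∀ i a b, ∑ j, P i j a b = 1)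
    (c1 c2 : Fin X → U → U → ℝ)
    (ρ : ℝ) (hρ0 : 0 ≤ ρ) (hρ1 : ρ < 1)
    (pstar qstar : Fin X → U → ℝ) (hp : IsPolicy pstar) (hq : IsPolicy qstar)
    (V1 V2 : Fin X → ℝ)
    (hV1eq : V1 = inducedCost c1 pstar qstar + ρ • (inducedMat P pstar qstar).mulVec V1)
    (hV2eq : V2 = inducedCost c2 pstar qstar + ρ • (inducedMat P pstar qstar).mulVec V2)
    (hV1le : ∀ p : Fin X → U → ℝ, IsPolicy p → ∀ i,
      V1 i ≤ inducedCost c1 p qstar i + ρ * (inducedMat P p qstar).mulVec V1 i)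
    (hV2le : ∀ q : Fin X → U → ℝ, IsPolicy q → ∀ i,
      V2 i ≤ inducedCost c2 pstar q i + ρ * (inducedMat P pstar q).mulVec V2 i) :
    (∀ p q : Fin X → U → ℝ, IsPolicy p → IsPolicy q →
      Summable (fun k : ℕ => ρ ^ k • ((inducedMat P p q) ^ k).mulVec (inducedCost c1 p q)) ∧
      Summable (fun k : ℕ => ρ ^ k • ((inducedMat P p q) ^ k).mulVec (inducedCost c2 p q))) ∧
    discountedJ P c1 ρ pstar qstar = V1 ∧
    discountedJ P c2 ρ pstar qstar = V2 ∧
    (∀ p : Fin X → U → ℝ, IsPolicy p → ∀ i, V1 i ≤ discountedJ P c1 ρ p qstar i) ∧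
    (∀ q : Fin X → U → ℝ, IsPolicy q → ∀ i, V2 i ≤ discountedJ P c2 ρ pstar q i) := by
  have stochastic {p q : Fin X → U → ℝ} (hp : IsPolicy p) (hq : IsPolicy q) :
      inducedMat P p q ∈ Matrix.rowStochastic ℝ (Fin X) :=
    inducedMat_mem_rowStochastic hPnn hProw hp hq
  have hρ : |ρ| < 1 := by rwa [abs_of_nonneg hρ0]
  refine ⟨fun p q hp hq ↦ ⟨?_, ?_⟩, ?_, ?_, fun p hp ↦ ?_, fun q hq ↦ ?_⟩
  · exact summable_pow_smul_pow_mulVec (stochastic hp hq) hρ _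
  · exact summable_pow_smul_pow_mulVec (stochastic hp hq) hρ _
  · exact tsum_pow_smul_pow_mulVec_eq_of_eq_add
      (summable_pow_smul_pow_mulVec (stochastic hp hq) hρ V1) hV1eq
  · exact tsum_pow_smul_pow_mulVec_eq_of_eq_add
      (summable_pow_smul_pow_mulVec (stochastic hp hq) hρ V2) hV2eq
  · exact le_tsum_pow_smul_pow_mulVec_of_le_add (stochastic hp hq) hρ0 hρ1 (hV1le p hp)
  · exact le_tsum_pow_smul_pow_mulVec_of_le_add (stochastic hp hq) hρ0 hρ1 (hV2le q hq)
end

section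
/- Neyman–Pearson lemma: let (E, 𝒜, ν) be a measure space and let f, g : E → [0,∞) be measurable with ∫ f dν = ∫ g dν = 1. Fix a constant c > 0 and define the decision rule φ*(x) = 1 if f(x) < c·g(x) and φ*(x) = 0 if f(x) ≥ c·g(x). Suppose ∫ f φ* dν = α. Then for every measurable decision rule φ : E → [0,1] with ∫ f φ dν ≤ α, one has ∫ g φ dν ≤ ∫ g φ* dν; that is, among all decision rules with false-rejection probability at most α, the likelihood-ratio threshold rule φ* maximizes the detection probability ∫ g φ dν. -/
open MeasureTheory

/-!
The rule `φ*` rejects exactly where `c * g - f` is positive, so pointwise it maximizes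
`(c * g - f) * φ` over all decision rules `φ`. Integrating, `φ*` maximizes the Lagrangian
`c * ∫ g φ - ∫ f φ`; a competitor with `∫ f φ ≤ ∫ f φ*` can then have no larger `∫ g φ`,
because the multiplier `c` is positive.
-/

section DecisionRule

variable {E : Type*} [MeasurableSpace E] {ν : Measure E} {f g h φ φstar : E → ℝ} {c : ℝ}

/-- A (randomized) decision rule: `φ x` is the probability of rejecting when `x` is observed.
Measurability and the bounds are required only up to `ν`-null sets. -/
structure IsDecisionRule (ν : Measure E) (φ : E → ℝ) : Prop where
  aestronglyMeasurable : AEStronglyMeasurable φ ν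
  ae_mem_Icc : ∀ᵐ x ∂ν, φ x ∈ Set.Icc (0 : ℝ) 1

/-- A decision rule which rejects where `h` is positive and accepts where `h` is negative; on
`{h = 0}` it is unconstrained. For `h = c * g - f` these are the likelihood-ratio threshold rules
comparing `f` with `c * g`, with arbitrary randomization at ties. -/
structure IsThresholdRule (ν : Measure E) (h φ : E → ℝ) : Prop extends IsDecisionRule ν φ where
  ae_eq_one_of_pos : ∀ᵐ x ∂ν, 0 < h x → φ x = 1
  ae_eq_zero_of_neg : ∀ᵐ x ∂ν, h x < 0 → φ x = 0

theorem IsDecisionRule.integrable_mul (hφ : IsDecisionRule ν φ) (hh : Integrable h ν) :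
    Integrable (fun x => h x * φ x) ν := by
  refine hh.mul_bdd (c := 1) hφ.aestronglyMeasurable ?_
  filter_upwards [hφ.ae_mem_Icc] with x hx
  rw [Real.norm_of_nonneg hx.1]
  exact hx.2

theorem isThresholdRule_indicator_pos (hh : AEMeasurable h ν) :
    IsThresholdRule ν h ({x | 0 < h x}.indicator 1) where
  aestronglyMeasurable :=
    aestronglyMeasurable_one.indicator₀ (nullMeasurableSet_lt aemeasurable_const hh)
  ae_mem_Icc := .of_forall fun _ =>
    ⟨Set.indicator_nonneg (fun _ _ => zero_le_one) _, Set.indicator_le_self' (by simp) _⟩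
  ae_eq_one_of_pos := .of_forall fun _ hx => Set.indicator_of_mem hx 1
  ae_eq_zero_of_neg := .of_forall fun _ hx => Set.indicator_of_notMem hx.not_gt 1

theorem isThresholdRule_of_eq_ite_lt (hf : AEMeasurable f ν) (hg : AEMeasurable g ν)
    (hφstar : ∀ x, φstar x = if f x < c * g x then 1 else 0) :
    IsThresholdRule ν (fun x => c * g x - f x) φstar := by
  have hφstar_eq : φstar = {x | 0 < c * g x - f x}.indicator 1 := by
    ext x
    simp [hφstar, Set.indicator_apply]
  exact hφstar_eq ▸ isThresholdRule_indicator_pos ((hg.const_mul c).sub hf)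

theorem IsThresholdRule.ae_mul_le_mul (hφstar : IsThresholdRule ν h φstar)
    (hφ : IsDecisionRule ν φ) : ∀ᵐ x ∂ν, h x * φ x ≤ h x * φstar x := by
  filter_upwards [hφ.ae_mem_Icc, hφstar.ae_eq_one_of_pos, hφstar.ae_eq_zero_of_neg]
    with x ⟨hφ_nonneg, hφ_le_one⟩ h_one h_zero
  rcases lt_trichotomy (h x) 0 with hneg | hzero | hpos
  · rw [h_zero hneg, mul_zero]
    exact mul_nonpos_of_nonpos_of_nonneg hneg.le hφ_nonneg
  · simp [hzero]
  · rw [h_one hpos]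
    exact mul_le_mul_of_nonneg_left hφ_le_one hpos.le

theorem IsThresholdRule.integral_mul_le_integral_mul (hφstar : IsThresholdRule ν h φstar)
    (hφ : IsDecisionRule ν φ) (hh : Integrable h ν) :
    ∫ x, h x * φ x ∂ν ≤ ∫ x, h x * φstar x ∂ν :=
  integral_mono_ae (hφ.integrable_mul hh) (hφstar.integrable_mul hh) (hφstar.ae_mul_le_mul hφ)

theorem IsDecisionRule.integral_const_mul_sub_mul (hφ : IsDecisionRule ν φ)
    (hf : Integrable f ν) (hg : Integrable g ν) :
    ∫ x, (c * g x - f x) * φ x ∂ν = c * ∫ x, g x * φ x ∂ν - ∫ x, f x * φ x ∂ν := by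
  simp only [sub_mul, mul_assoc]
  rw [integral_sub ((hφ.integrable_mul hg).const_mul c) (hφ.integrable_mul hf),
    integral_const_mul]

theorem stmt_12_general (hf : Integrable f ν) (hg : Integrable g ν) (hc : 0 < c)
    (hφstar : IsThresholdRule ν (fun x => c * g x - f x) φstar) (hφ : IsDecisionRule ν φ)
    (hle : ∫ x, f x * φ x ∂ν ≤ ∫ x, f x * φstar x ∂ν) :
    ∫ x, g x * φ x ∂ν ≤ ∫ x, g x * φstar x ∂ν := by
  have lagrangian_le := hφstar.integral_mul_le_integral_mul hφ ((hg.const_mul c).sub hf)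
  rw [hφ.integral_const_mul_sub_mul hf hg, hφstar.integral_const_mul_sub_mul hf hg]
    at lagrangian_le
  exact le_of_mul_le_mul_left (by linarith) hc

end DecisionRule

/-- Neyman–Pearson lemma: among all decision rules `φ : E → [0,1]` with false-rejection
probability `∫ f φ dν ≤ α`, the likelihood-ratio threshold rule
`φ*(x) = 1 if f(x) < c·g(x), else 0` (with `∫ f φ* dν = α`) maximizes the detection
probability `∫ g φ dν`. -/
theorem stmt_12 {E : Type*} [MeasurableSpace E] (ν : Measure E)
    (f g : E → ℝ) (hf : Measurable f) (hg : Measurable g)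
    (hfnn : ∀ x, 0 ≤ f x) (hgnn : ∀ x, 0 ≤ g x)
    (hfint : Integrable f ν) (hgint : Integrable g ν)
    (hf1 : ∫ x, f x ∂ν = 1) (hg1 : ∫ x, g x ∂ν = 1)
    (c : ℝ) (hc : 0 < c) (α : ℝ)
    (φstar : E → ℝ) (hφstar : ∀ x, φstar x = if f x < c * g x then 1 else 0)
    (hα : ∫ x, f x * φstar x ∂ν = α) :
    ∀ φ : E → ℝ, Measurable φ → (∀ x, φ x ∈ Set.Icc (0 : ℝ) 1) →
      (∫ x, f x * φ x ∂ν) ≤ α →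
      (∫ x, g x * φ x ∂ν) ≤ ∫ x, g x * φstar x ∂ν := by
  intro φ hφ hφ01 hle
  exact stmt_12_general hfint hgint hc
    (isThresholdRule_of_eq_ite_lt hf.aemeasurable hg.aemeasurable hφstar)
    ⟨hφ.aestronglyMeasurable, .of_forall hφ01⟩ (hle.trans_eq hα.symm)
end

section
/- Sensitivity of the HMM filter to the transition matrix (sample-path bound): let B_{iy} > 0 for i ∈ {1,…,X} and y in a finite observation set, and let P and P̄ be X×X row-stochastic matrices with Σ_j |P_{ij} − P̄_{ij}| ≤ ε for every row i. For probability vectors π, π̄ and an observation y, define A(π̄,y) = (Σ_m B_{my}(P̄ᵀπ̄)_m) / max_i B_{iy} and μ(y) = (min_i B_{iy}) / (max_i B_{iy}). Then the filter updates satisfy ‖T(π,y;P) − T(π̄,y;P̄)‖₁ ≤ ε / max{A(π̄,y) − ε, μ(y)} + δ(P̄)·‖π − π̄‖₁ / A(π̄,y), where δ(P̄) is the Dobrushin coefficient of P̄ and ‖·‖₁ is the ℓ¹ norm on ℝ^X. -/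
/-- The Dobrushin coefficient of a row-stochastic matrix:
`δ(P) = (1/2) · max_{i,j} Σ_l |P_{il} − P_{jl}|`. -/
noncomputable def dobrushin (X : ℕ) (P : Matrix (Fin X) (Fin X) ℝ) : ℝ :=
  (1 / 2) * ⨆ i : Fin X, ⨆ j : Fin X, ∑ l, |P i l - P j l|

/-- The HMM filter normalization `σ(π,y;P) = Σ_m B_{my} (Pᵀπ)_m`. -/
noncomputable def hmmSigma {X : ℕ} {Y : Type*} [Fintype Y]
    (P : Matrix (Fin X) (Fin X) ℝ) (B : Fin X → Y → ℝ) (π : Fin X → ℝ) (y : Y) : ℝ :=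
  ∑ m, B m y * P.transpose.mulVec π m

/-- The HMM filter update `T(π,y;P)_j = B_{jy}(Pᵀπ)_j / σ(π,y;P)`. -/
noncomputable def hmmFilter {X : ℕ} {Y : Type*} [Fintype Y]
    (P : Matrix (Fin X) (Fin X) ℝ) (B : Fin X → Y → ℝ) (π : Fin X → ℝ) (y : Y) :
    Fin X → ℝ :=
  fun j => B j y * P.transpose.mulVec π j / hmmSigma P B π y

/-!
A Bayes update `T(p) = b p / ⟨b, p⟩` satisfies
`⟨b, r⟩ (T(p) − T(r)) = b (p − r) − ⟨b, p − r⟩ T(p)`, and `T(p)` is a probability vector, so the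
`ℓ¹` norm of the right-hand side is at most `∑ b |p − r| + |⟨b, p − r⟩|`. When `p` and `r` have the
same mass, this is at most `max b · ‖p − r‖₁`, with no factor `2`. For the predicted distributions
`p = Pᵀπ` and `r = P̄ᵀπ̄`, write `p − r = (P − P̄)ᵀπ + P̄ᵀ(π − π̄)`: the first term has norm at most
`ε`, and the second is contracted by the Dobrushin coefficient. This gives the bound
`(ε + δ(P̄) ‖π − π̄‖₁) / A(π̄, y)`, and the denominator `max {A − ε, μ}` of the theorem is at
most `A`.
-/

open Finset Matrix

section WeightedSums

variable {ι κ R : Type*} [Fintype ι] [Fintype κ]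

theorem sum_vecMul_of_sum_row_eq_one [NonAssocSemiring R] {A : Matrix ι κ R}
    (hA : ∀ i, ∑ j, A i j = 1) (v : ι → R) : ∑ j, (v ᵥ* A) j = ∑ i, v i := by
  simp only [vecMul, dotProduct]
  rw [sum_comm]
  simp only [← mul_sum, hA, mul_one]

theorem sum_abs_vecMul_le [Ring R] [LinearOrder R] [IsOrderedRing R] {A : Matrix ι κ R} {c : R}
    (hA : ∀ i, ∑ j, |A i j| ≤ c) (v : ι → R) : ∑ j, |(v ᵥ* A) j| ≤ (∑ i, |v i|) * c :=
  calc ∑ j, |(v ᵥ* A) j| ≤ ∑ j, ∑ i, |v i| * |A i j| := by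
        gcongr with j
        simpa only [vecMul, dotProduct, abs_mul] using
          abs_sum_le_sum_abs (fun i ↦ v i * A i j) univ
    _ = ∑ i, |v i| * ∑ j, |A i j| := by
        rw [sum_comm]
        simp only [mul_sum]
    _ ≤ ∑ i, |v i| * c := by gcongr with i; exact hA i
    _ = (∑ i, |v i|) * c := (sum_mul ..).symm

theorem sum_mul_abs_add_abs_dotProduct_le [CommRing R] [LinearOrder R] [IsStrictOrderedRing R]
    {b d : ι → R} {M : R} (hb : ∀ i, b i ≤ M) (hd : ∑ i, d i = 0) :
    ∑ i, b i * |d i| + |b ⬝ᵥ d| ≤ M * ∑ i, |d i| := by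
  have weighted_le (e : ι → R) (he : ∀ i, 0 ≤ |d i| + e i) :
      ∑ i, b i * |d i| + b ⬝ᵥ e ≤ M * ∑ i, |d i| + M * ∑ i, e i := by
    simp only [dotProduct, mul_sum, ← sum_add_distrib, ← mul_add]
    gcongr with i
    exacts [he i, hb i]
  have upper := weighted_le d fun i ↦ neg_le_iff_add_nonneg'.mp (neg_abs_le (d i))
  have lower := weighted_le (-d) fun i ↦ by simpa using le_abs_self (d i)
  simp only [dotProduct_neg, Pi.neg_apply, sum_neg_distrib, hd, neg_zero, mul_zero, add_zero]
    at upper lower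
  exact le_sub_iff_add_le'.mp (abs_le'.mpr ⟨by linarith, by linarith⟩)

theorem iInf_le_dotProduct_of_mem_stdSimplex (b : ι → ℝ) {p : ι → ℝ} (hp : p ∈ stdSimplex ℝ ι) :
    ⨅ i, b i ≤ b ⬝ᵥ p :=
  calc ⨅ i, b i = ∑ j, (⨅ i, b i) * p j := by rw [← mul_sum, hp.2, mul_one]
    _ ≤ ∑ j, b j * p j := by
        gcongr with j
        exacts [hp.1 j, ciInf_le (Set.finite_range b).bddBelow j]

end WeightedSums

section Dobrushin

variable {ι E : Type*} [Fintype ι] [SeminormedAddCommGroup E] [NormedSpace ℝ E]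

theorem sum_posPart_eq_half_sum_abs {d : ι → ℝ} (hd : ∑ i, d i = 0) :
    ∑ i, (d i)⁺ = (∑ i, |d i|) / 2 := by
  have sum_sub : ∑ i, (d i)⁺ - ∑ i, (d i)⁻ = 0 := by
    simp only [← sum_sub_distrib, posPart_sub_negPart, hd]
  have sum_add : ∑ i, (d i)⁺ + ∑ i, (d i)⁻ = ∑ i, |d i| := by
    simp only [← sum_add_distrib, posPart_add_negPart]
  linarith

theorem sum_negPart_eq_half_sum_abs {d : ι → ℝ} (hd : ∑ i, d i = 0) :
    ∑ i, (d i)⁻ = (∑ i, |d i|) / 2 := by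
  simpa only [posPart_neg, abs_neg] using
    sum_posPart_eq_half_sum_abs (d := fun i ↦ -d i) (by simp only [sum_neg_distrib, hd, neg_zero])

-- The product coupling transports the positive part of `d` onto its negative part.
theorem half_sum_abs_smul_sum_smul_eq_of_sum_eq_zero {d : ι → ℝ} (hd : ∑ i, d i = 0) (x : ι → E) :
    ((∑ i, |d i|) / 2) • ∑ i, d i • x i = ∑ i, ∑ j, ((d i)⁺ * (d j)⁻) • (x i - x j) := by
  have pos_part : ∑ i, ∑ j, ((d i)⁺ * (d j)⁻) • x i = ((∑ i, |d i|) / 2) • ∑ i, (d i)⁺ • x i := by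
    simp only [← sum_smul, ← mul_sum, sum_negPart_eq_half_sum_abs hd, smul_sum, smul_smul,
      mul_comm _ ((∑ i, |d i|) / 2)]
  have neg_part : ∑ i, ∑ j, ((d i)⁺ * (d j)⁻) • x j = ((∑ i, |d i|) / 2) • ∑ j, (d j)⁻ • x j := by
    rw [sum_comm]
    simp only [← sum_smul, ← sum_mul, sum_posPart_eq_half_sum_abs hd, smul_sum, smul_smul]
  simp only [smul_sub, sum_sub_distrib, pos_part, neg_part]
  simp only [← smul_sub, ← sum_sub_distrib, ← sub_smul, posPart_sub_negPart]

theorem norm_sum_smul_le_of_sum_eq_zero {d : ι → ℝ} {x : ι → E} {D : ℝ} (hd : ∑ i, d i = 0)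
    (hx : ∀ i j, ‖x i - x j‖ ≤ D) : ‖∑ i, d i • x i‖ ≤ D / 2 * ∑ i, |d i| := by
  obtain sum_abs_eq | sum_abs_pos := (sum_nonneg fun i _ ↦ abs_nonneg (d i)).eq_or_lt
  · have d_eq_zero (i : ι) : d i = 0 :=
      abs_eq_zero.mp <|
        (sum_eq_zero_iff_of_nonneg fun i _ ↦ abs_nonneg (d i)).mp sum_abs_eq.symm i (mem_univ i)
    simp [d_eq_zero]
  · have half_sum_pos : 0 < (∑ i, |d i|) / 2 := half_pos sum_abs_pos
    refine le_of_mul_le_mul_left ?_ half_sum_pos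
    calc (∑ i, |d i|) / 2 * ‖∑ i, d i • x i‖
        = ‖∑ i, ∑ j, ((d i)⁺ * (d j)⁻) • (x i - x j)‖ := by
          rw [← half_sum_abs_smul_sum_smul_eq_of_sum_eq_zero hd, norm_smul,
            Real.norm_of_nonneg half_sum_pos.le]
      _ ≤ ∑ i, ∑ j, (d i)⁺ * (d j)⁻ * D := by
          refine norm_sum_le_of_le _ fun i _ ↦ norm_sum_le_of_le _ fun j _ ↦ ?_
          have weight_nonneg : 0 ≤ (d i)⁺ * (d j)⁻ := by positivity
          rw [norm_smul, Real.norm_of_nonneg weight_nonneg]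
          gcongr
          exact hx i j
      _ = (∑ i, |d i|) / 2 * (D / 2 * ∑ i, |d i|) := by
          simp only [← sum_mul, ← mul_sum, sum_posPart_eq_half_sum_abs hd,
            sum_negPart_eq_half_sum_abs hd]
          ring

theorem sum_abs_sub_le_two_mul_dobrushin {X : ℕ} (P : Matrix (Fin X) (Fin X) ℝ) (i j : Fin X) :
    ∑ l, |P i l - P j l| ≤ 2 * dobrushin X P := by
  have le_iSup_iSup : ∑ l, |P i l - P j l| ≤ ⨆ i, ⨆ j, ∑ l, |P i l - P j l| :=
    le_ciSup_of_le (Set.finite_range _).bddAbove i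
      (le_ciSup (f := fun j ↦ ∑ l, |P i l - P j l|) (Set.finite_range _).bddAbove j)
  unfold dobrushin
  linarith

theorem sum_abs_vecMul_le_dobrushin_mul {X : ℕ} (P : Matrix (Fin X) (Fin X) ℝ) {d : Fin X → ℝ}
    (hd : ∑ i, d i = 0) : ∑ l, |(d ᵥ* P) l| ≤ dobrushin X P * ∑ i, |d i| := by
  have rows_close (i j : Fin X) :
      ‖WithLp.toLp 1 (P i) - WithLp.toLp 1 (P j)‖ ≤ 2 * dobrushin X P := by
    simpa [PiLp.norm_eq_of_L1] using sum_abs_sub_le_two_mul_dobrushin P i j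
  simpa [PiLp.norm_eq_of_L1, vecMul, dotProduct] using norm_sum_smul_le_of_sum_eq_zero hd rows_close

theorem sum_abs_vecMul_sub_vecMul_le {X : ℕ} {P Pb : Matrix (Fin X) (Fin X) ℝ} {ε : ℝ}
    (hε : ∀ i, ∑ j, |P i j - Pb i j| ≤ ε) {π πb : Fin X → ℝ} (hπ : π ∈ stdSimplex ℝ (Fin X))
    (hπb : ∑ i, πb i = 1) :
    ∑ j, |(π ᵥ* P) j - (πb ᵥ* Pb) j| ≤ ε + dobrushin X Pb * ∑ i, |π i - πb i| := by
  have model_error : ∑ j, |(π ᵥ* (P - Pb)) j| ≤ ε := by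
    simpa only [abs_of_nonneg (hπ.1 _), hπ.2, one_mul] using
      sum_abs_vecMul_le (A := P - Pb) hε π
  have prior_error : ∑ j, |((π - πb) ᵥ* Pb) j| ≤ dobrushin X Pb * ∑ i, |π i - πb i| :=
    sum_abs_vecMul_le_dobrushin_mul Pb (by simp [hπ.2, hπb])
  calc ∑ j, |(π ᵥ* P) j - (πb ᵥ* Pb) j|
      = ∑ j, |(π ᵥ* (P - Pb)) j + ((π - πb) ᵥ* Pb) j| := by
        simp only [vecMul_sub, sub_vecMul, Pi.sub_apply, sub_add_sub_cancel]
    _ ≤ ∑ j, |(π ᵥ* (P - Pb)) j| + ∑ j, |((π - πb) ᵥ* Pb) j| := by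
        rw [← sum_add_distrib]
        gcongr
        exact abs_add_le _ _
    _ ≤ ε + dobrushin X Pb * ∑ i, |π i - πb i| := add_le_add model_error prior_error

end Dobrushin

section BayesUpdate

variable {ι 𝕜 : Type*} [Fintype ι] [Field 𝕜] {b p r : ι → 𝕜}

/-- The Bayes update of the weights `p` by the likelihood `b`: the posterior distribution
proportional to `b i * p i`. It is `0` when the normalization `b ⬝ᵥ p` vanishes. -/
def bayesUpdate (b p : ι → 𝕜) : ι → 𝕜 :=
  fun i ↦ b i * p i / b ⬝ᵥ p

theorem sum_bayesUpdate (hp : b ⬝ᵥ p ≠ 0) : ∑ i, bayesUpdate b p i = 1 := by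
  simp only [bayesUpdate, ← sum_div]
  exact div_self hp

theorem bayesUpdate_sub_bayesUpdate (hp : b ⬝ᵥ p ≠ 0) (hr : b ⬝ᵥ r ≠ 0) (i : ι) :
    bayesUpdate b p i - bayesUpdate b r i =
      (b i * (p i - r i) - bayesUpdate b p i * b ⬝ᵥ (p - r)) / b ⬝ᵥ r := by
  rw [dotProduct_sub]
  unfold bayesUpdate
  field_simp
  ring

variable [LinearOrder 𝕜] [IsStrictOrderedRing 𝕜]

theorem bayesUpdate_nonneg (hb : 0 ≤ b) (hp : 0 ≤ p) (i : ι) : 0 ≤ bayesUpdate b p i :=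
  div_nonneg (mul_nonneg (hb i) (hp i)) (dotProduct_nonneg_of_nonneg hb hp)

theorem sum_abs_bayesUpdate_sub_le {M : 𝕜} (hb : 0 ≤ b) (hbM : ∀ i, b i ≤ M) (hp : 0 ≤ p)
    (hpr : ∑ i, p i = ∑ i, r i) (hbp : b ⬝ᵥ p ≠ 0) (hbr : 0 < b ⬝ᵥ r) :
    ∑ i, |bayesUpdate b p i - bayesUpdate b r i| ≤ M * (∑ i, |p i - r i|) / b ⬝ᵥ r := by
  have termwise (i : ι) : |bayesUpdate b p i - bayesUpdate b r i| ≤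
      (b i * |p i - r i| + bayesUpdate b p i * |b ⬝ᵥ (p - r)|) / b ⬝ᵥ r := by
    rw [bayesUpdate_sub_bayesUpdate hbp hbr.ne', abs_div, abs_of_pos hbr]
    gcongr
    refine (abs_sub _ _).trans_eq ?_
    rw [abs_mul, abs_mul, abs_of_nonneg (hb i), abs_of_nonneg (bayesUpdate_nonneg hb hp i)]
  calc ∑ i, |bayesUpdate b p i - bayesUpdate b r i|
      ≤ ∑ i, (b i * |p i - r i| + bayesUpdate b p i * |b ⬝ᵥ (p - r)|) / b ⬝ᵥ r :=
        sum_le_sum fun i _ ↦ termwise i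
    _ = (∑ i, b i * |p i - r i| + |b ⬝ᵥ (p - r)|) / b ⬝ᵥ r := by
        rw [← sum_div, sum_add_distrib, ← sum_mul, sum_bayesUpdate hbp, one_mul]
    _ ≤ M * (∑ i, |p i - r i|) / b ⬝ᵥ r := by
        gcongr
        exact sum_mul_abs_add_abs_dotProduct_le hbM (by simp [hpr])

end BayesUpdate

section HMMFilter

variable {X : ℕ} {Y : Type*} [Fintype Y]

theorem hmmSigma_eq_dotProduct (P : Matrix (Fin X) (Fin X) ℝ) (B : Fin X → Y → ℝ) (π : Fin X → ℝ)
    (y : Y) : hmmSigma P B π y = (B · y) ⬝ᵥ (π ᵥ* P) := by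
  simp only [hmmSigma, mulVec_transpose, dotProduct]

theorem hmmFilter_eq_bayesUpdate (P : Matrix (Fin X) (Fin X) ℝ) (B : Fin X → Y → ℝ)
    (π : Fin X → ℝ) (y : Y) : hmmFilter P B π y = bayesUpdate (B · y) (π ᵥ* P) := by
  funext j
  simp only [hmmFilter, bayesUpdate, hmmSigma_eq_dotProduct, mulVec_transpose]

theorem iInf_le_hmmSigma {P : Matrix (Fin X) (Fin X) ℝ} (hP : P ∈ rowStochastic ℝ (Fin X))
    (B : Fin X → Y → ℝ) {π : Fin X → ℝ} (hπ : π ∈ stdSimplex ℝ (Fin X)) (y : Y) :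
    ⨅ i, B i y ≤ hmmSigma P B π y := by
  rw [hmmSigma_eq_dotProduct]
  exact iInf_le_dotProduct_of_mem_stdSimplex _ ⟨nonneg_vecMul_of_mem_rowStochastic hP hπ.1,
    (sum_vecMul_of_sum_row_eq_one (sum_row_of_mem_rowStochastic hP) π).trans hπ.2⟩

theorem stmt_13_general {B : Fin X → Y → ℝ} {y : Y} (hB : ∀ i, 0 ≤ B i y)
    {P Pb : Matrix (Fin X) (Fin X) ℝ} (hP : P ∈ rowStochastic ℝ (Fin X))
    (hPb : ∀ i, ∑ j, Pb i j = 1) {ε : ℝ} (hε : ∀ i, ∑ j, |P i j - Pb i j| ≤ ε)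
    {π πb : Fin X → ℝ} (hπ : π ∈ stdSimplex ℝ (Fin X)) (hπb : ∑ i, πb i = 1)
    (hσ : hmmSigma P B π y ≠ 0) (hσb : 0 < hmmSigma Pb B πb y) :
    ∑ j, |hmmFilter P B π y j - hmmFilter Pb B πb y j| ≤
      (ε + dobrushin X Pb * ∑ i, |π i - πb i|) / (hmmSigma Pb B πb y / ⨆ i, B i y) := by
  have same_mass : ∑ j, (π ᵥ* P) j = ∑ j, (πb ᵥ* Pb) j := by
    rw [sum_vecMul_of_sum_row_eq_one (sum_row_of_mem_rowStochastic hP),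
      sum_vecMul_of_sum_row_eq_one hPb, hπ.2, hπb]
  rw [hmmSigma_eq_dotProduct] at hσ hσb
  rw [hmmFilter_eq_bayesUpdate, hmmFilter_eq_bayesUpdate, hmmSigma_eq_dotProduct,
    div_div_eq_mul_div, mul_comm _ (⨆ i, B i y)]
  refine (sum_abs_bayesUpdate_sub_le hB (le_ciSup (Set.finite_range (B · y)).bddAbove)
    (nonneg_vecMul_of_mem_rowStochastic hP hπ.1) same_mass hσ hσb).trans ?_
  gcongr
  · exact Real.iSup_nonneg hB
  · exact sum_abs_vecMul_sub_vecMul_le hε hπ hπb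

end HMMFilter

/-- Sample-path sensitivity bound of the HMM filter to the transition matrix:
`‖T(π,y;P) − T(π̄,y;P̄)‖₁ ≤ ε / max{A(π̄,y) − ε, μ(y)} + δ(P̄)·‖π − π̄‖₁ / A(π̄,y)`
where `A(π̄,y) = σ(π̄,y;P̄)/max_i B_{iy}` and `μ(y) = min_i B_{iy} / max_i B_{iy}`. -/
theorem stmt_13 (X : ℕ) (hX : 0 < X) (Y : Type*) [Fintype Y]
    (B : Fin X → Y → ℝ) (hB : ∀ i y, 0 < B i y)
    (P Pb : Matrix (Fin X) (Fin X) ℝ)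
    (hPnn : ∀ i j, 0 ≤ P i j) (hProw : ∀ i, ∑ j, P i j = 1)
    (hPbnn : ∀ i j, 0 ≤ Pb i j) (hPbrow : ∀ i, ∑ j, Pb i j = 1)
    (ε : ℝ) (hε : ∀ i, ∑ j, |P i j - Pb i j| ≤ ε)
    (π πb : Fin X → ℝ)
    (hπnn : ∀ i, 0 ≤ π i) (hπsum : ∑ i, π i = 1)
    (hπbnn : ∀ i, 0 ≤ πb i) (hπbsum : ∑ i, πb i = 1)
    (y : Y) :
    ∑ j, |hmmFilter P B π y j - hmmFilter Pb B πb y j| ≤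
      ε / max (hmmSigma Pb B πb y / (⨆ i, B i y) - ε) ((⨅ i, B i y) / (⨆ i, B i y)) +
      dobrushin X Pb * (∑ i, |π i - πb i|) / (hmmSigma Pb B πb y / (⨆ i, B i y)) := by
  have : Nonempty (Fin X) := ⟨⟨0, hX⟩⟩
  have hP : P ∈ rowStochastic ℝ (Fin X) := mem_rowStochastic_iff_sum.mpr ⟨hPnn, hProw⟩
  have hPb : Pb ∈ rowStochastic ℝ (Fin X) := mem_rowStochastic_iff_sum.mpr ⟨hPbnn, hPbrow⟩
  have ε_nonneg : 0 ≤ ε := (sum_nonneg fun _ _ ↦ abs_nonneg _).trans (hε ⟨0, hX⟩)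
  have inf_pos : 0 < ⨅ i, B i y := by
    obtain ⟨i, hi⟩ := exists_eq_ciInf_of_finite (f := (B · y))
    exact hi ▸ hB i y
  have sup_pos : 0 < ⨆ i, B i y :=
    (hB ⟨0, hX⟩ y).trans_le (le_ciSup (Set.finite_range (B · y)).bddAbove _)
  have inf_le_σ : ⨅ i, B i y ≤ hmmSigma P B π y := iInf_le_hmmSigma hP B ⟨hπnn, hπsum⟩ y
  have inf_le_σb : ⨅ i, B i y ≤ hmmSigma Pb B πb y := iInf_le_hmmSigma hPb B ⟨hπbnn, hπbsum⟩ y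
  refine (stmt_13_general (fun i ↦ (hB i y).le) hP hPbrow hε ⟨hπnn, hπsum⟩ hπbsum
    (inf_pos.trans_le inf_le_σ).ne' (inf_pos.trans_le inf_le_σb)).trans ?_
  rw [add_div]
  gcongr
  exact max_le (sub_le_self _ ε_nonneg) (by gcongr)
end

section
/- Let S ≥ 2 and m : {1,…,S} → (0,1). Define the S×S row-stochastic matrix P by P_{ij} = m(i)(1−m(j))/(S−1) for j ≠ i and P_{ii} = 1 − Σ_{j≠i} P_{ij}. Then the probability vector π_∞ defined by π_∞(θ) = κ (1−m(θ)) ∏_{j≠θ} m(j), with κ > 0 the normalizing constant, is a stationary distribution of P: Pᵀπ_∞ = π_∞. -/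
/-!
The chain is reversible. Multiplying `π i = κ a i ∏_{k ≠ i} m k` by the leaving factor `m i`
completes the product, so for `i ≠ j` the flow `π i * P i j` is `κ (∏ k, m k) (a i * a j) Q i j`,
which is symmetric in `i` and `j` as soon as the proposal matrix `Q` is. Summing this detailed
balance over `i` and using that the rows of `P` sum to one gives stationarity. The stochastic ruler
chain has acceptance factor `a = 1 - m` and uniform proposals `Q i j = 1 / (S - 1)`.
-/

open Finset Matrix

section DetailedBalance

variable {ι R : Type*}

/-- Detailed balance of a weight vector `π` with respect to a transition matrix `P`: the flow from
`i` to `j` equals the flow from `j` to `i`. It reduces stationarity to a pairwise identity; neither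
`P` nor `π` is required to be nonnegative or normalized. -/
def DetailedBalance [Mul R] (P : Matrix ι ι R) (π : ι → R) : Prop :=
  ∀ i j, π i * P i j = π j * P j i

theorem DetailedBalance.vecMul_eq [Fintype ι] [NonAssocSemiring R] {P : Matrix ι ι R} {π : ι → R}
    (h : DetailedBalance P π) (hrow : ∀ i, ∑ j, P i j = 1) : π ᵥ* P = π := by
  funext j
  calc ∑ i, π i * P i j = ∑ i, π j * P j i := sum_congr rfl fun i _ => h i j
    _ = π j * ∑ i, P j i := (mul_sum ..).symm
    _ = π j := by rw [hrow, mul_one]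

end DetailedBalance

theorem sum_eq_of_eq_sub_sum_erase {ι M : Type*} [Fintype ι] [DecidableEq ι] [AddCommGroup M]
    {f g : ι → M} {i : ι} {c : M} (hoff : ∀ j, j ≠ i → f j = g j)
    (hdiag : f i = c - ∑ j ∈ univ.erase i, g j) : ∑ j, f j = c := by
  have hsum : ∑ j ∈ univ.erase i, f j = ∑ j ∈ univ.erase i, g j :=
    sum_congr rfl fun j hj => hoff j (ne_of_mem_erase hj)
  rw [← add_sum_erase univ f (mem_univ i), hdiag, hsum, sub_add_cancel]

section SymmetricProposal

variable {ι R : Type*} [Fintype ι] [DecidableEq ι] [CommSemiring R] {m a : ι → R}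
  {P Q : Matrix ι ι R} {κ : R} {π : ι → R}

theorem detailedBalance_of_eq_mul_prod_erase (hQ : Q.IsSymm)
    (hP : ∀ i j, j ≠ i → P i j = m i * a j * Q i j)
    (hπ : ∀ i, π i = κ * a i * ∏ k ∈ univ.erase i, m k) : DetailedBalance P π := by
  have flow (i j : ι) (hij : j ≠ i) : π i * P i j = κ * (∏ k, m k) * (a i * a j) * Q i j := by
    rw [hπ, hP i j hij, ← mul_prod_erase univ m (mem_univ i)]
    ring
  intro i j
  obtain rfl | hij := eq_or_ne i j
  · rfl
  · rw [flow i j hij.symm, flow j i hij, hQ.apply, mul_comm (a i)]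

theorem stmt_17_general (hQ : Q.IsSymm) (hP : ∀ i j, j ≠ i → P i j = m i * a j * Q i j)
    (hrow : ∀ i, ∑ j, P i j = 1) (hπ : ∀ i, π i = κ * a i * ∏ k ∈ univ.erase i, m k) :
    Pᵀ *ᵥ π = π :=
  (mulVec_transpose P π).trans
    ((detailedBalance_of_eq_mul_prod_erase hQ hP hπ).vecMul_eq hrow)

end SymmetricProposal

/-- The stationary distribution of the stochastic search-ruler Markov chain:
for the chain with `P_{ij} = m(i)(1−m(j))/(S−1)` for `j ≠ i` (and diagonal entries making
rows sum to one), the vector `π_∞(θ) = κ (1−m(θ)) ∏_{j≠θ} m(j)` satisfies `Pᵀπ_∞ = π_∞`. -/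
theorem stmt_17 (S : ℕ) (hS : 2 ≤ S) (m : Fin S → ℝ)
    (hm0 : ∀ θ, 0 < m θ) (hm1 : ∀ θ, m θ < 1)
    (P : Matrix (Fin S) (Fin S) ℝ)
    (hPoff : ∀ i j : Fin S, j ≠ i → P i j = m i * (1 - m j) / ((S : ℝ) - 1))
    (hPdiag : ∀ i : Fin S,
      P i i = 1 - ∑ j ∈ Finset.univ.erase i, m i * (1 - m j) / ((S : ℝ) - 1))
    (κ : ℝ) (hκ : κ = (∑ θ, (1 - m θ) * ∏ j ∈ Finset.univ.erase θ, m j)⁻¹)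
    (πinf : Fin S → ℝ)
    (hπ : ∀ θ, πinf θ = κ * (1 - m θ) * ∏ j ∈ Finset.univ.erase θ, m j) :
    P.transpose.mulVec πinf = πinf :=
  stmt_17_general (Q := of fun _ _ => ((S : ℝ) - 1)⁻¹) (IsSymm.ext fun _ _ => rfl)
    (by simpa only [of_apply, div_eq_mul_inv] using hPoff)
    (fun i => sum_eq_of_eq_sub_sum_erase (hPoff i) (hPdiag i)) hπ
end

section
/- Stochastic search-ruler theorem: let S ≥ 2 and m : {1,…,S} → (0,1), and define the S×S row-stochastic matrix P by P_{ij} = m(i)(1−m(j))/(S−1) for j ≠ i and P_{ii} = 1 − Σ_{j≠i} P_{ij}. This chain is irreducible (all off-diagonal entries are positive), and its unique stationary distribution π_∞ satisfies, for the global minimizer θ* with m(θ*) < m(θ) for all θ ≠ θ*, the ratio π_∞(θ*)/π_∞(θ) = [m(θ)(1−m(θ*))]/[m(θ*)(1−m(θ))] > 1 for every θ ≠ θ*; hence the stationary distribution puts strictly more mass on θ* than on any other candidate. -/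
/-!
Because the jump probabilities factor as `a i * b j`, the transition matrix is a rank-one
perturbation of a diagonal one, `1 - (∑ b) diag a + a bᵀ`. A vector `π` is therefore fixed by the
transpose exactly when `(∑ b) a j π j = (a ⬝ π) b j` for all `j`, so `π` is proportional to `b / a`;
for the search ruler `b / a = (1 - m) / m`, which is a decreasing function of `m`.
-/

open Finset Matrix

variable {ι R K : Type*} [Fintype ι]

section CommRing

variable [DecidableEq ι] [CommRing R]

/-- The transition matrix of the chain that jumps from `i` to `j ≠ i` with probability `a i * b j`
and stays at `i` with the remaining probability. The search ruler is the case `a = m`,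
`b j = (1 - m j) / (S - 1)`. The entries are not required to be nonnegative. -/
def separableTransition (a b : ι → R) : Matrix ι ι R :=
  of fun i j => if i = j then 1 - ∑ k ∈ univ.erase i, a i * b k else a i * b j

theorem separableTransition_eq_one_sub_diagonal_add_vecMulVec (a b : ι → R) :
    separableTransition a b = 1 - diagonal ((∑ k, b k) • a) + vecMulVec a b := by
  ext i j
  obtain rfl | hij := eq_or_ne i j
  · have hsum : a i * b i + ∑ k ∈ univ.erase i, a i * b k = (∑ k, b k) * a i := by
      rw [add_sum_erase _ (fun k => a i * b k) (mem_univ i), ← mul_sum, mul_comm]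
    simp only [separableTransition, of_apply, if_true, Matrix.add_apply, Matrix.sub_apply,
      one_apply_eq, diagonal_apply_eq, Pi.smul_apply, smul_eq_mul, vecMulVec_apply, ← hsum]
    ring
  · simp [separableTransition, vecMulVec_apply, hij]

theorem separableTransition_transpose_mulVec (a b π : ι → R) :
    (separableTransition a b)ᵀ *ᵥ π = π - (∑ k, b k) • (a * π) + (a ⬝ᵥ π) • b := by
  ext j
  simp [separableTransition_eq_one_sub_diagonal_add_vecMulVec, add_mulVec, sub_mulVec,
    transpose_vecMulVec, vecMulVec_mulVec, diagonal_smul, smul_mulVec, mulVec_diagonal]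

theorem separableTransition_transpose_mulVec_eq_self_iff {a b π : ι → R} :
    (separableTransition a b)ᵀ *ᵥ π = π ↔ (∑ k, b k) • (a * π) = (a ⬝ᵥ π) • b := by
  rw [separableTransition_transpose_mulVec, sub_add_eq_add_sub, sub_eq_iff_eq_add,
    add_right_inj, eq_comm]

end CommRing

section Field

variable [Field K] {a b π : ι → K}

/-- The stationary distribution of `separableTransition a b`: the weights `b / a`, normalised to
have sum one. -/
def separableStationary (a b : ι → K) (j : ι) : K :=
  b j / a j / ∑ i, b i / a i

theorem sum_separableStationary (hW : ∑ i, b i / a i ≠ 0) : ∑ j, separableStationary a b j = 1 := by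
  simp only [separableStationary, ← sum_div, div_self hW]

theorem separableStationary_div_separableStationary (hW : ∑ i, b i / a i ≠ 0) (x y : ι) :
    separableStationary a b x / separableStationary a b y = a y * b x / (a x * b y) := by
  rw [separableStationary, separableStationary, div_div_div_cancel_right₀ hW, div_div_div_eq,
    mul_comm (b x)]

theorem separableStationary_div_const {c : K} (hc : c ≠ 0) :
    separableStationary a (fun j => b j / c) = separableStationary a b := by
  ext j
  simp only [separableStationary, div_right_comm (b _) c, ← sum_div, div_div_div_cancel_right₀ hc]

variable [DecidableEq ι]

theorem separableTransition_transpose_mulVec_separableStationary (ha : ∀ i, a i ≠ 0) :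
    (separableTransition a b)ᵀ *ᵥ separableStationary a b = separableStationary a b := by
  have hmul (j : ι) : a j * separableStationary a b j = b j / ∑ i, b i / a i := by
    rw [separableStationary, ← mul_div_assoc, mul_div_cancel₀ _ (ha j)]
  have hdot : a ⬝ᵥ separableStationary a b = (∑ k, b k) / ∑ i, b i / a i := by
    simp only [dotProduct, hmul, sum_div]
  rw [separableTransition_transpose_mulVec_eq_self_iff, hdot]
  ext j
  simp only [Pi.smul_apply, Pi.mul_apply, smul_eq_mul, hmul]
  ring

theorem eq_separableStationary (ha : ∀ i, a i ≠ 0) (hB : ∑ k, b k ≠ 0) (hsum : ∑ j, π j = 1)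
    (hπ : (separableTransition a b)ᵀ *ᵥ π = π) : π = separableStationary a b := by
  set t : K := (a ⬝ᵥ π) / ∑ k, b k
  have hprop (j : ι) : π j = b j / a j * t := by
    have hj : (∑ k, b k) * (a j * π j) = (a ⬝ᵥ π) * b j :=
      congrFun (separableTransition_transpose_mulVec_eq_self_iff.mp hπ) j
    rw [div_mul_div_comm, eq_div_iff (mul_ne_zero (ha j) hB)]
    linear_combination hj
  have ht : (∑ i, b i / a i) * t = 1 := by
    rw [sum_mul, ← hsum]
    exact sum_congr rfl fun j _ => (hprop j).symm
  ext j
  rw [hprop j, separableStationary, eq_div_iff (left_ne_zero_of_mul_eq_one ht), mul_assoc,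
    mul_comm t, ht, mul_one]

end Field

section LinearOrderedField

variable [Field K] [LinearOrder K] [IsStrictOrderedRing K]

theorem separableStationary_pos {a b : ι → K} (ha : ∀ i, 0 < a i) (hb : ∀ i, 0 < b i) (j : ι) :
    0 < separableStationary a b j :=
  have hw (i : ι) : 0 < b i / a i := div_pos (hb i) (ha i)
  div_pos (hw j) (sum_pos (fun i _ => hw i) ⟨j, mem_univ j⟩)

variable [DecidableEq ι]

theorem stmt_18_general {a b : ι → K} (ha : ∀ i, 0 < a i) (hb : ∀ i, 0 < b i) {c : K} (hc : 0 < c)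
    {P : Matrix ι ι K} (hPoff : ∀ i j, j ≠ i → P i j = a i * b j / c)
    (hPdiag : ∀ i, P i i = 1 - ∑ j ∈ univ.erase i, a i * b j / c)
    {θstar : ι} (hθstar : ∀ θ, θ ≠ θstar → a θstar * b θ < a θ * b θstar) :
    (∀ i j, i ≠ j → 0 < P i j) ∧
    (∃! π : ι → K, ∑ θ, π θ = 1 ∧ Pᵀ *ᵥ π = π) ∧
    ∀ π : ι → K, ∑ θ, π θ = 1 → Pᵀ *ᵥ π = π →
      (∀ θ, 0 < π θ) ∧
      ∀ θ, θ ≠ θstar →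
        π θstar / π θ = a θ * b θstar / (a θstar * b θ) ∧ 1 < π θstar / π θ := by
  have hP : P = separableTransition a fun j => b j / c := by
    ext i j
    obtain rfl | hij := eq_or_ne i j
    · simp only [separableTransition, of_apply, if_true, hPdiag, mul_div_assoc]
    · rw [hPoff i j hij.symm, separableTransition, of_apply, if_neg hij, mul_div_assoc]
  have hW : ∑ i, b i / a i ≠ 0 :=
    (sum_pos (fun i _ => div_pos (hb i) (ha i)) ⟨θstar, mem_univ _⟩).ne'
  have hB : ∑ k, b k / c ≠ 0 :=
    (sum_pos (fun k _ => div_pos (hb k) hc) ⟨θstar, mem_univ _⟩).ne'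
  have huniq (π : ι → K) (hsum : ∑ θ, π θ = 1) (hπ : Pᵀ *ᵥ π = π) :
      π = separableStationary a b := by
    rw [hP] at hπ
    rw [← separableStationary_div_const hc.ne']
    exact eq_separableStationary (fun i => (ha i).ne') hB hsum hπ
  have hstat : Pᵀ *ᵥ separableStationary a b = separableStationary a b := by
    rw [hP, ← separableStationary_div_const hc.ne']
    exact separableTransition_transpose_mulVec_separableStationary fun i => (ha i).ne'
  refine ⟨fun i j hij => ?_, ⟨_, ⟨sum_separableStationary hW, hstat⟩, fun π h => huniq π h.1 h.2⟩,
    fun π hsum hπ => ?_⟩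
  · rw [hPoff i j hij.symm]
    exact div_pos (mul_pos (ha i) (hb j)) hc
  · obtain rfl := huniq π hsum hπ
    refine ⟨separableStationary_pos ha hb, fun θ hθ => ?_⟩
    rw [separableStationary_div_separableStationary hW, one_lt_div (mul_pos (ha _) (hb _))]
    exact ⟨rfl, hθstar θ hθ⟩

end LinearOrderedField

/-- Stochastic search-ruler theorem: the candidate-solution Markov chain with
`P_{ij} = m(i)(1−m(j))/(S−1)` for `j ≠ i` has all off-diagonal entries positive
(irreducibility), a unique stationary distribution, and that stationary distribution puts
strictly more mass on the global minimizer `θ*` than on any other candidate, with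
`π_∞(θ*)/π_∞(θ) = [m(θ)(1−m(θ*))]/[m(θ*)(1−m(θ))] > 1`. -/
theorem stmt_18 (S : ℕ) (hS : 2 ≤ S) (m : Fin S → ℝ)
    (hm0 : ∀ θ, 0 < m θ) (hm1 : ∀ θ, m θ < 1)
    (P : Matrix (Fin S) (Fin S) ℝ)
    (hPoff : ∀ i j : Fin S, j ≠ i → P i j = m i * (1 - m j) / ((S : ℝ) - 1))
    (hPdiag : ∀ i : Fin S,
      P i i = 1 - ∑ j ∈ Finset.univ.erase i, m i * (1 - m j) / ((S : ℝ) - 1))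
    (θstar : Fin S) (hθstar : ∀ θ : Fin S, θ ≠ θstar → m θstar < m θ) :
    (∀ i j : Fin S, i ≠ j → 0 < P i j) ∧
    (∃! π : Fin S → ℝ, (∀ θ, 0 ≤ π θ) ∧ (∑ θ, π θ = 1) ∧ P.transpose.mulVec π = π) ∧
    (∀ π : Fin S → ℝ, (∀ θ, 0 ≤ π θ) → (∑ θ, π θ = 1) → P.transpose.mulVec π = π →
      ∀ θ : Fin S, θ ≠ θstar →
        π θstar / π θ = m θ * (1 - m θstar) / (m θstar * (1 - m θ)) ∧
        1 < π θstar / π θ) := by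
  have hS' : (2 : ℝ) ≤ S := by exact_mod_cast hS
  obtain ⟨hpos, ⟨π, ⟨hsum, hπ⟩, huniq⟩, hratio⟩ := stmt_18_general hm0
    (fun θ => sub_pos.mpr (hm1 θ)) (by linarith : 0 < (S : ℝ) - 1) hPoff hPdiag
    (fun θ hθ => by linarith [hθstar θ hθ])
  exact ⟨hpos, ⟨π, ⟨fun θ => ((hratio π hsum hπ).1 θ).le, hsum, hπ⟩, fun ρ hρ => huniq ρ hρ.2⟩,
    fun ρ _ hρsum hρ => (hratio ρ hρsum hρ).2⟩
end
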